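/- Define a : ℕ → ℕ by a(0) = 1 and a(i+1) = 10^{a(i)}, and let c = ∑_{i=0}^∞ 10^{-a(i)} (a real number). Then c is a Liouville number, i.e., for every n ∈ ℕ there exist integers p and q with q > 1 such that 0 < |c − p/q| < 1/q^n. -/

import Mathlib

/-!
If `a : ℕ → ℕ` is strictly increasing, the partial sum of `∑ 1 / b ^ a i` up to `i = k` is a
fraction with denominator `q = b ^ a k`, and comparison with a geometric series bounds the error by
`2 / b ^ a (k + 1)`. As soon as `a (k + 1)` exceeds `(n + 1) * a k`, with `a k ≠ 0`, this error is
below `1 / q ^ n`. A tower of exponentials produces such gaps for every `n`, because `n * m < g ^ m`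
for large `m`.
-/

open Filter Finset

theorem liouville_iff_abs_sub_pos {x : ℝ} :
    Liouville x ↔
      ∀ n : ℕ, ∃ p q : ℤ, 1 < q ∧ 0 < |x - p / q| ∧ |x - p / q| < 1 / (q : ℝ) ^ n := by
  simp only [Liouville, abs_pos, sub_ne_zero]

theorem exists_nat_sum_one_div_pow_eq_div {ι K : Type*} [Field K] {b : ℕ} (hb : (b : K) ≠ 0)
    {a : ι → ℕ} {s : Finset ι} {N : ℕ} (ha : ∀ i ∈ s, a i ≤ N) :
    ∃ p : ℕ, ∑ i ∈ s, 1 / (b : K) ^ a i = p / (b : K) ^ N := by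
  refine ⟨∑ i ∈ s, b ^ (N - a i), ?_⟩
  push_cast
  rw [sum_div]
  refine sum_congr rfl fun i hi => ?_
  rw [div_eq_div_iff (pow_ne_zero _ hb) (pow_ne_zero _ hb), one_mul, ← pow_add,
    Nat.sub_add_cancel (ha i hi)]

section Series

variable {a : ℕ → ℕ}

theorem summable_one_div_pow_of_strictMono (ha : StrictMono a) {b : ℝ} (hb : 1 < b) :
    Summable fun i => 1 / b ^ a i :=
  summable_one_div_pow_of_le hb fun _ => ha.le_apply

theorem tsum_one_div_pow_le_of_strictMono (ha : StrictMono a) {b : ℝ} (hb : 2 ≤ b) :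
    ∑' i, 1 / b ^ a i ≤ 2 / b ^ a 0 := by
  have one_lt_b : 1 < b := by linarith
  have add_le (i : ℕ) : a 0 + i ≤ a i := by simpa [add_comm] using ha.add_le_nat i 0
  calc
    ∑' i, 1 / b ^ a i ≤ ∑' i, 1 / b ^ (a 0 + i) :=
      (summable_one_div_pow_of_strictMono ha one_lt_b).tsum_le_tsum
        (fun i => one_div_pow_le_one_div_pow_of_le one_lt_b.le (add_le i))
        (summable_one_div_pow_of_le one_lt_b fun _ => Nat.le_add_left _ _)
    _ = 1 / b ^ a 0 * ∑' i : ℕ, (1 / b) ^ i := by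
      rw [← tsum_mul_left]
      simp only [pow_add, one_div, mul_inv, inv_pow]
    _ = 1 / b ^ a 0 * (1 - 1 / b)⁻¹ := by
      rw [tsum_geometric_of_lt_one (by positivity) ((div_lt_one (by positivity)).2 one_lt_b)]
    _ ≤ 1 / b ^ a 0 * 2 := by
      gcongr
      exact sub_one_div_inv_le_two hb
    _ = 2 / b ^ a 0 := one_div_mul_eq_div _ _

theorem two_div_pow_lt_one_div_pow {b : ℝ} (hb : 2 ≤ b) {m N : ℕ} (h : m + 1 < N) :
    2 / b ^ N < 1 / b ^ m := by
  rw [div_lt_div_iff₀ (by positivity) (by positivity), one_mul]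
  calc
    2 * b ^ m ≤ b * b ^ m := by gcongr
    _ = b ^ (m + 1) := (pow_succ' b m).symm
    _ < b ^ N := pow_lt_pow_right₀ (by linarith) h

theorem liouville_tsum_one_div_pow_of_strictMono (ha : StrictMono a)
    (gaps : ∀ n, ∃ᶠ k in atTop, n * a k < a (k + 1)) {b : ℕ} (hb : 2 ≤ b) :
    Liouville (∑' i, 1 / (b : ℝ) ^ a i) := by
  intro n
  have two_le_b : (2 : ℝ) ≤ b := mod_cast hb
  have one_lt_b : (1 : ℝ) < b := by linarith
  obtain ⟨k, hgap, hk⟩ := ((gaps (n + 1)).and_eventually (eventually_ge_atTop 1)).exists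
  have a_pos : 0 < a k := hk.trans ha.le_apply
  obtain ⟨p, hp⟩ := exists_nat_sum_one_div_pow_eq_div (K := ℝ) (b := b) (by positivity)
    (s := range (k + 1)) fun i hi => ha.monotone (Nat.lt_succ_iff.1 (mem_range.1 hi))
  have tail_strictMono : StrictMono fun i => a (i + (k + 1)) :=
    ha.comp (strictMono_id.add_const _)
  have tail_pos : 0 < ∑' i, 1 / (b : ℝ) ^ a (i + (k + 1)) :=
    (summable_one_div_pow_of_strictMono tail_strictMono one_lt_b).tsum_pos
      (fun _ => by positivity) 0 (by positivity)
  have tail_lt : ∑' i, 1 / (b : ℝ) ^ a (i + (k + 1)) < 1 / (b : ℝ) ^ (a k * n) := by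
    refine (tsum_one_div_pow_le_of_strictMono tail_strictMono two_le_b).trans_lt
      (two_div_pow_lt_one_div_pow two_le_b ?_)
    rw [zero_add]
    linarith
  refine ⟨p, (b : ℤ) ^ a k, one_lt_pow₀ (by exact_mod_cast hb) a_pos.ne', ?_⟩
  push_cast
  rw [← (summable_one_div_pow_of_strictMono ha one_lt_b).sum_add_tsum_nat_add (k + 1), hp,
    add_sub_cancel_left, abs_of_pos tail_pos, ← pow_mul]
  exact ⟨by simpa using tail_pos.ne', tail_lt⟩

end Series

section Tower

variable {g : ℕ} {a : ℕ → ℕ}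

theorem strictMono_of_succ_eq_pow (hg : 1 < g) (ha : ∀ i, a (i + 1) = g ^ a i) : StrictMono a :=
  strictMono_nat_of_lt_succ fun i => ha i ▸ Nat.lt_pow_self hg

theorem eventually_mul_lt_pow (hg : 1 < g) (n : ℕ) : ∀ᶠ m : ℕ in atTop, n * m < g ^ m := by
  have ratio_tendsto : Tendsto (fun m : ℕ => n * ((m : ℝ) ^ 1 / (g : ℝ) ^ m)) atTop (nhds 0) := by
    simpa using (tendsto_pow_const_div_const_pow_of_one_lt 1 (r := (g : ℝ))
      (by exact_mod_cast hg)).const_mul (n : ℝ)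
  filter_upwards [ratio_tendsto.eventually_lt_const one_pos] with m hm
  rw [pow_one, ← mul_div_assoc, div_lt_one (by positivity)] at hm
  exact_mod_cast hm

theorem eventually_mul_lt_succ_of_succ_eq_pow (hg : 1 < g) (ha : ∀ i, a (i + 1) = g ^ a i)
    (n : ℕ) : ∀ᶠ k in atTop, n * a k < a (k + 1) := by
  simp only [ha]
  exact (strictMono_of_succ_eq_pow hg ha).tendsto_atTop.eventually (eventually_mul_lt_pow hg n)

theorem stmt_2_general (hg : 1 < g) (ha : ∀ i, a (i + 1) = g ^ a i) {b : ℕ} (hb : 2 ≤ b) :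
    Liouville (∑' i, (b : ℝ) ^ (-(a i : ℤ))) := by
  simp only [zpow_neg, zpow_natCast, ← one_div]
  exact liouville_tsum_one_div_pow_of_strictMono (strictMono_of_succ_eq_pow hg ha)
    (fun n => (eventually_mul_lt_succ_of_succ_eq_pow hg ha n).frequently) hb

end Tower

theorem stmt_2 (a : ℕ → ℕ) (ha0 : a 0 = 1) (ha : ∀ i, a (i + 1) = 10 ^ a i)
    (c : ℝ) (hc : c = ∑' i : ℕ, (10 : ℝ) ^ (-(a i : ℤ))) :
    ∀ n : ℕ, ∃ p q : ℤ, 1 < q ∧ 0 < |c - p / q| ∧ |c - p / q| < 1 / (q : ℝ) ^ n := by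
  rw [← liouville_iff_abs_sub_pos, hc]
  exact_mod_cast stmt_2_general (by norm_num) ha (b := 10) (by norm_num)
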